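/- arXiv:2211.02900 — 5 statements merged into one kernel-verified Lean document; each statement's English description precedes it below -/
import Mathlib

section
/- Fix a k×k orthogonal matrix Q and let θ : Matrix (Fin D) (Fin k) ℝ → Matrix (Fin D) (Fin k) ℝ be right multiplication by Q, θ(A) = A·Q. Let F be a bijection of Matrix (Fin D) (Fin k) ℝ whose inverse F⁻¹ is differentiable everywhere, and suppose F is equivariant: F(A·Q) = F(A)·Q for all A. Let p̄ : Matrix (Fin D) (Fin k) ℝ → ℝ be invariant: p̄(A·Q) = p̄(A) for all A. Define the transformed density p̄_F(Y) = p̄(F⁻¹(Y)) · |det(fderiv F⁻¹ at Y)|, where the determinant is that of the Fréchet derivative of F⁻¹ at Y as a linear endomorphism of the matrix space. Then p̄_F is invariant under θ: p̄_F(Y·Q) = p̄_F(Y) for all Y. -/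
/-!
Equivariance passes from `F` to its inverse `G`, so `G` commutes with right multiplication `R` by
`Q`. Since `R` is linear, the chain rule gives `G'(Y Q) ∘ R = R ∘ G'(Y)`. As `R` is invertible
(with inverse right multiplication by `Qᵀ`), the two derivatives are conjugate and have the same
determinant, while `p (G (Y Q)) = p (G Y * Q) = p (G Y)` by invariance of `p`.
-/

open Matrix

attribute [local instance] Matrix.normedAddCommGroup Matrix.normedSpace

/-- If a differentiable map commutes with a linear automorphism `R`, its derivatives at `x` and
`R x` are conjugate by `R`, hence have equal determinants. -/
theorem det_fderiv_eq_of_commute {E : Type*} [NormedAddCommGroup E] [NormedSpace ℝ E]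
    [FiniteDimensional ℝ E] {G : E → E} (hG : Differentiable ℝ G) (R : E ≃ₗ[ℝ] E)
    (hGR : ∀ x, G (R x) = R (G x)) (x : E) :
    LinearMap.det (fderiv ℝ G (R x)).toLinearMap =
      LinearMap.det (fderiv ℝ G x).toLinearMap := by
  let Rc : E ≃L[ℝ] E := R.toContinuousLinearEquiv
  have hcomm : G ∘ Rc = Rc ∘ G := funext hGR
  have hderiv : (fderiv ℝ G (R x)).comp (Rc : E →L[ℝ] E) =
      (Rc : E →L[ℝ] E).comp (fderiv ℝ G x) := by
    have h₁ : HasFDerivAt (G ∘ Rc) ((fderiv ℝ G (R x)).comp (Rc : E →L[ℝ] E)) x :=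
      HasFDerivAt.comp x (hG (R x)).hasFDerivAt Rc.hasFDerivAt
    have h₂ : HasFDerivAt (Rc ∘ G) ((Rc : E →L[ℝ] E).comp (fderiv ℝ G x)) x :=
      HasFDerivAt.comp x Rc.hasFDerivAt (hG x).hasFDerivAt
    rw [hcomm] at h₁
    exact h₁.unique h₂
  have hconj : (fderiv ℝ G (R x)).toLinearMap =
      (R : E →ₗ[ℝ] E) ∘ₗ (fderiv ℝ G x).toLinearMap ∘ₗ (R.symm : E →ₗ[ℝ] E) := by
    refine LinearMap.ext fun v => ?_
    have h := DFunLike.congr_fun hderiv (R.symm v)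
    have hv : Rc (R.symm v) = v := R.apply_symm_apply v
    simp only [ContinuousLinearMap.comp_apply, ContinuousLinearEquiv.coe_coe, hv] at h
    exact h
  rw [hconj, LinearMap.det_conj]

/-- If `F` is an equivariant bijection (w.r.t. right multiplication by an
orthogonal `Q`) with everywhere-differentiable inverse `G`, and `p̄` is invariant, then
the transformed density `p̄_F(Y) = p̄(G Y) * |det (fderiv G Y)|` is invariant:
`p̄_F(Y Q) = p̄_F(Y)`. -/
theorem transformed_density_invariant (D k : ℕ)
    (Q : Matrix (Fin k) (Fin k) ℝ) (hQ : Qᵀ * Q = 1)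
    (F G : Matrix (Fin D) (Fin k) ℝ → Matrix (Fin D) (Fin k) ℝ)
    (hFbij : Function.Bijective F)
    (hGF : Function.LeftInverse G F) (hFG : Function.RightInverse G F)
    (hGdiff : Differentiable ℝ G)
    (hFequiv : ∀ A : Matrix (Fin D) (Fin k) ℝ, F (A * Q) = F A * Q)
    (p : Matrix (Fin D) (Fin k) ℝ → ℝ)
    (hpinv : ∀ A : Matrix (Fin D) (Fin k) ℝ, p (A * Q) = p A) :
    ∀ Y : Matrix (Fin D) (Fin k) ℝ,
      p (G (Y * Q)) * |LinearMap.det (fderiv ℝ G (Y * Q)).toLinearMap| =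
        p (G Y) * |LinearMap.det (fderiv ℝ G Y).toLinearMap| := by
  intro Y
  have hQ' : Q * Qᵀ = 1 := mul_eq_one_comm.mp hQ
  have hGequiv : ∀ Z, G (Z * Q) = G Z * Q := fun Z =>
    hFbij.1 (by rw [hFG, hFequiv, hFG])
  let R : Matrix (Fin D) (Fin k) ℝ ≃ₗ[ℝ] Matrix (Fin D) (Fin k) ℝ :=
    { toFun := fun A => A * Q
      invFun := fun A => A * Qᵀ
      map_add' := fun A B => Matrix.add_mul A B Q
      map_smul' := fun c A => Matrix.smul_mul c A Q
      left_inv := fun A => by simp [Matrix.mul_assoc, hQ']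
      right_inv := fun A => by simp [Matrix.mul_assoc, hQ] }
  have hdet : LinearMap.det (fderiv ℝ G (Y * Q)).toLinearMap =
      LinearMap.det (fderiv ℝ G Y).toLinearMap :=
    det_fderiv_eq_of_commute hGdiff R hGequiv Y
  rw [hGequiv, hpinv, hdet]
end

section
/- Let Y be a D×k real matrix with YᵀY = I_k and let ξ be a D×k real matrix that is horizontal at Y, i.e. Yᵀξ = 0. Then the matrix I_k + (1/4)·ξᵀξ is invertible, and the Cayley-transform-based horizontal retraction X = R̄_Y(ξ) := Y + ξ − ((1/2)Y + (1/4)ξ)·(I_k + (1/4)ξᵀξ)⁻¹·ξᵀξ satisfies XᵀX = I_k; that is, R̄_Y maps the horizontal space at Y into the Stiefel manifold St(k,D). -/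
open Matrix

/-!
Put `S = ξᵀξ`, `M = 1 + S/4` and `N = M⁻¹`. The matrix `M` is positive definite, hence invertible,
and `N` is symmetric. Since `N S = 4 (1 - N)`, the retraction simplifies to
`X = Y (2N - 1) + ξ N`. Orthonormality of `Y` and horizontality of `ξ` then give
`Xᵀ X = (2N - 1)² + N S N = (4N² - 4N + 1) + 4 (1 - N) N = 1`.
-/

/-- For `Y ∈ St(k,D)` and `ξ` horizontal at `Y`, the matrix
`I + (1/4)ξᵀξ` is invertible and the Cayley-transform-based horizontal retraction
`R̄_Y(ξ) = Y + ξ − ((1/2)Y + (1/4)ξ)(I + (1/4)ξᵀξ)⁻¹ ξᵀξ` lands on the Stiefel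
manifold: `(R̄_Y ξ)ᵀ (R̄_Y ξ) = I`. -/
theorem cayley_retraction_mem_stiefel (D k : ℕ)
    (Y ξ : Matrix (Fin D) (Fin k) ℝ)
    (hY : Yᵀ * Y = 1) (hξ : Yᵀ * ξ = 0) :
    IsUnit ((1 : Matrix (Fin k) (Fin k) ℝ) + (1 / 4 : ℝ) • (ξᵀ * ξ)) ∧
      (Y + ξ - ((1 / 2 : ℝ) • Y + (1 / 4 : ℝ) • ξ) *
          ((1 : Matrix (Fin k) (Fin k) ℝ) + (1 / 4 : ℝ) • (ξᵀ * ξ))⁻¹ * (ξᵀ * ξ))ᵀ *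
        (Y + ξ - ((1 / 2 : ℝ) • Y + (1 / 4 : ℝ) • ξ) *
          ((1 : Matrix (Fin k) (Fin k) ℝ) + (1 / 4 : ℝ) • (ξᵀ * ξ))⁻¹ * (ξᵀ * ξ)) = 1 := by
  have hM : ((1 : Matrix (Fin k) (Fin k) ℝ) + (1 / 4 : ℝ) • (ξᵀ * ξ)).PosDef := by
    refine PosDef.one.add_posSemidef (PosSemidef.smul ?_ (by norm_num))
    simpa using posSemidef_conjTranspose_mul_self ξ
  refine ⟨hM.isUnit, ?_⟩
  have hdet := (isUnit_iff_isUnit_det _).1 hM.isUnit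
  have hMT : ((1 : Matrix (Fin k) (Fin k) ℝ) + (1 / 4 : ℝ) • (ξᵀ * ξ))ᵀ =
      1 + (1 / 4 : ℝ) • (ξᵀ * ξ) := by
    simp
  have hS : ξᵀ * ξ = (4 : ℝ) • ((1 + (1 / 4 : ℝ) • (ξᵀ * ξ)) - 1) := by
    rw [add_sub_cancel_left, smul_smul]
    norm_num
  generalize (1 : Matrix (Fin k) (Fin k) ℝ) + (1 / 4 : ℝ) • (ξᵀ * ξ) = M at hdet hMT hS ⊢
  have hNT : (M⁻¹)ᵀ = M⁻¹ := by rw [transpose_nonsing_inv, hMT]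
  have hNS : M⁻¹ * (ξᵀ * ξ) = (4 : ℝ) • (1 - M⁻¹) := by
    rw [hS, Matrix.mul_smul, Matrix.mul_sub, nonsing_inv_mul _ hdet, Matrix.mul_one]
  have hX : Y + ξ - ((1 / 2 : ℝ) • Y + (1 / 4 : ℝ) • ξ) * M⁻¹ * (ξᵀ * ξ) =
      Y * ((2 : ℝ) • M⁻¹ - 1) + ξ * M⁻¹ := by
    rw [Matrix.mul_assoc, hNS]
    simp only [Matrix.mul_smul, Matrix.smul_mul, Matrix.mul_sub, Matrix.add_mul, Matrix.mul_one]
    module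
  have hξ' : ξᵀ * Y = 0 := by simpa using congrArg transpose hξ
  rw [hX]
  generalize M⁻¹ = N at hNT hNS ⊢
  have hXT : (Y * ((2 : ℝ) • N - 1) + ξ * N)ᵀ = ((2 : ℝ) • N - 1) * Yᵀ + N * ξᵀ := by
    simp [hNT]
  calc (Y * ((2 : ℝ) • N - 1) + ξ * N)ᵀ * (Y * ((2 : ℝ) • N - 1) + ξ * N)
      = ((2 : ℝ) • N - 1) * (Yᵀ * Y) * ((2 : ℝ) • N - 1)
        + ((2 : ℝ) • N - 1) * (Yᵀ * ξ) * N
        + N * (ξᵀ * Y) * ((2 : ℝ) • N - 1) + N * (ξᵀ * ξ) * N := by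
        rw [hXT]
        simp only [Matrix.add_mul, Matrix.mul_add, Matrix.mul_assoc]
        abel
    _ = 1 := by
        rw [hY, hξ, hξ', hNS]
        simp only [Matrix.mul_smul, Matrix.smul_mul, Matrix.mul_sub, Matrix.sub_mul,
          Matrix.mul_one, Matrix.one_mul, Matrix.mul_zero, Matrix.zero_mul]
        module
end

section
/- Let Y be a D×k real matrix with YᵀY = I_k and let ξ be a D×k real matrix with Yᵀξ = 0. Set X = R̄_Y(ξ) = Y + ξ − ((1/2)Y + (1/4)ξ)·(I_k + (1/4)ξᵀξ)⁻¹·ξᵀξ. Then I_k + YᵀX = 2·(I_k + (1/4)ξᵀξ)⁻¹ is invertible, and the inverse-retraction formula recovers ξ: 2·(X − Y·Yᵀ·X)·(I_k + YᵀX)⁻¹ = ξ. -/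
/-!
Write `M = I + (1/4) ξᵀξ`, which is positive definite, hence invertible. Since `ξᵀξ = 4 (M - I)`,
one has `M⁻¹ ξᵀξ = 4 (I - M⁻¹)`, and the retraction collapses to `X = 2 Y M⁻¹ - Y + ξ M⁻¹`.
With `YᵀY = I` and `Yᵀξ = 0` this gives `I + YᵀX = 2 M⁻¹`, with inverse `(1/2) M`, and
`X - Y Yᵀ X = ξ M⁻¹`; multiplying the two recovers `ξ`.
-/

open Matrix

/-- With `X = R̄_Y(ξ)` the Cayley retraction of a horizontal `ξ` at
`Y ∈ St(k,D)`, one has `I + YᵀX = 2 (I + (1/4) ξᵀξ)⁻¹`, this matrix is invertible,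
and the inverse retraction recovers `ξ`: `2 (X − Y Yᵀ X)(I + Yᵀ X)⁻¹ = ξ`. -/
theorem cayley_inverse_retraction_recovers (D k : ℕ)
    (Y ξ : Matrix (Fin D) (Fin k) ℝ)
    (hY : Yᵀ * Y = 1) (hξ : Yᵀ * ξ = 0)
    (X : Matrix (Fin D) (Fin k) ℝ)
    (hX : X = Y + ξ - ((1 / 2 : ℝ) • Y + (1 / 4 : ℝ) • ξ) *
        ((1 : Matrix (Fin k) (Fin k) ℝ) + (1 / 4 : ℝ) • (ξᵀ * ξ))⁻¹ * (ξᵀ * ξ)) :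
    (1 : Matrix (Fin k) (Fin k) ℝ) + Yᵀ * X =
        (2 : ℝ) • ((1 : Matrix (Fin k) (Fin k) ℝ) + (1 / 4 : ℝ) • (ξᵀ * ξ))⁻¹ ∧
      IsUnit ((1 : Matrix (Fin k) (Fin k) ℝ) + Yᵀ * X) ∧
      (2 : ℝ) • ((X - Y * (Yᵀ * X)) *
        ((1 : Matrix (Fin k) (Fin k) ℝ) + Yᵀ * X)⁻¹) = ξ := by
  set M : Matrix (Fin k) (Fin k) ℝ := 1 + (1 / 4 : ℝ) • (ξᵀ * ξ) with hM
  have hS : (ξᵀ * ξ).PosSemidef := by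
    simpa [conjTranspose_eq_transpose_of_trivial] using posSemidef_conjTranspose_mul_self ξ
  have hMu : IsUnit M :=
    (PosDef.one.add_posSemidef (hS.smul (by norm_num : (0 : ℝ) ≤ 1 / 4))).isUnit
  have hdet : IsUnit M.det := (isUnit_iff_isUnit_det M).1 hMu
  have hWM : M⁻¹ * M = 1 := nonsing_inv_mul M hdet
  have hWS : M⁻¹ * (ξᵀ * ξ) = (4 : ℝ) • (1 - M⁻¹) := by
    have h : ξᵀ * ξ = (4 : ℝ) • (M - 1) := by
      rw [hM, add_sub_cancel_left, smul_smul]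
      norm_num
    rw [h, mul_smul_comm, mul_sub, hWM, mul_one]
  have hX' : X = (2 : ℝ) • (Y * M⁻¹) - Y + ξ * M⁻¹ := by
    rw [hX, Matrix.mul_assoc, hWS]
    simp only [Matrix.mul_smul, Matrix.mul_sub, Matrix.mul_one, Matrix.add_mul, Matrix.smul_mul]
    module
  have hYX : Yᵀ * X = (2 : ℝ) • M⁻¹ - 1 := by
    rw [hX', Matrix.mul_add, Matrix.mul_sub, Matrix.mul_smul, ← Matrix.mul_assoc,
      ← Matrix.mul_assoc, hY, hξ, Matrix.one_mul, Matrix.zero_mul, add_zero]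
  have h1 : 1 + Yᵀ * X = (2 : ℝ) • M⁻¹ := by rw [hYX]; abel
  have hprod : ((2 : ℝ) • M⁻¹) * ((1 / 2 : ℝ) • M) = 1 := by
    rw [smul_mul_smul_comm, hWM]
    norm_num
  have hhor : X - Y * (Yᵀ * X) = ξ * M⁻¹ := by
    rw [hYX, hX', Matrix.mul_sub, Matrix.mul_smul, Matrix.mul_one]
    abel
  refine ⟨h1, ?_, ?_⟩
  · rw [h1]
    exact IsUnit.of_mul_eq_one _ hprod
  · rw [h1, hhor, inv_eq_right_inv hprod, Matrix.mul_smul, Matrix.mul_assoc, hWM,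
      Matrix.mul_one, smul_smul]
    norm_num
end

section
/- Let Y be a D×k real matrix with YᵀY = I_k, let ξ be a D×k real matrix with Yᵀξ = 0, and let Q be a k×k orthogonal matrix. Then Qᵀ·ξᵀξ·Q = (ξQ)ᵀ(ξQ), the matrix I_k + (1/4)(ξQ)ᵀ(ξQ) is invertible, and the Cayley-transform-based horizontal retraction satisfies the equivariance (invariance) condition R̄_{YQ}(ξQ) = R̄_Y(ξ)·Q, i.e. (YQ) + (ξQ) − ((1/2)YQ + (1/4)ξQ)·(I_k + (1/4)(ξQ)ᵀ(ξQ))⁻¹·(ξQ)ᵀ(ξQ) = [Y + ξ − ((1/2)Y + (1/4)ξ)(I_k + (1/4)ξᵀξ)⁻¹ ξᵀξ]·Q. -/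
/-!
Conjugation by an orthogonal `Q` carries `ξᵀξ` to `(ξQ)ᵀ(ξQ)` and fixes the identity, so
`I + (1/4)(ξQ)ᵀ(ξQ) = Qᵀ (I + (1/4)ξᵀξ) Q`, whose inverse is `Qᵀ (I + (1/4)ξᵀξ)⁻¹ Q`.
Substituting this, every interior product `Q Qᵀ` cancels and a single factor `Q` remains on
the right. Invertibility is `isUnit_one_add_gram`.
-/

open Matrix

/-- `I + (1/4) ξᵀξ` is positive definite, hence invertible. -/
lemma isUnit_one_add_gram {D k : ℕ} (ξ : Matrix (Fin D) (Fin k) ℝ) :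
    IsUnit ((1 : Matrix (Fin k) (Fin k) ℝ) + (1 / 4 : ℝ) • (ξᵀ * ξ)) := by
  have h : (ξᵀ * ξ).PosSemidef := by
    simpa [conjTranspose_eq_transpose_of_trivial] using posSemidef_conjTranspose_mul_self ξ
  exact (PosDef.one.add_posSemidef (h.smul (by norm_num : (0 : ℝ) ≤ 1 / 4))).isUnit

/-- Equivariance of the Cayley-transform-based horizontal retraction:
for `Y ∈ St(k,D)`, `ξ` horizontal at `Y`, and `Q ∈ O(k)`, one has
`Qᵀ(ξᵀξ)Q = (ξQ)ᵀ(ξQ)`, the matrix `I + (1/4)(ξQ)ᵀ(ξQ)` is invertible, and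
`R̄_{YQ}(ξQ) = R̄_Y(ξ) Q`. -/
theorem cayley_retraction_equivariant (D k : ℕ)
    (Y ξ : Matrix (Fin D) (Fin k) ℝ)
    (Q : Matrix (Fin k) (Fin k) ℝ)
    (hY : Yᵀ * Y = 1) (hξ : Yᵀ * ξ = 0) (hQ : Qᵀ * Q = 1) :
    Qᵀ * (ξᵀ * ξ) * Q = (ξ * Q)ᵀ * (ξ * Q) ∧
    IsUnit ((1 : Matrix (Fin k) (Fin k) ℝ) + (1 / 4 : ℝ) • ((ξ * Q)ᵀ * (ξ * Q))) ∧
    Y * Q + ξ * Q - ((1 / 2 : ℝ) • (Y * Q) + (1 / 4 : ℝ) • (ξ * Q)) *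
        ((1 : Matrix (Fin k) (Fin k) ℝ) + (1 / 4 : ℝ) • ((ξ * Q)ᵀ * (ξ * Q)))⁻¹ *
        ((ξ * Q)ᵀ * (ξ * Q)) =
      (Y + ξ - ((1 / 2 : ℝ) • Y + (1 / 4 : ℝ) • ξ) *
        ((1 : Matrix (Fin k) (Fin k) ℝ) + (1 / 4 : ℝ) • (ξᵀ * ξ))⁻¹ * (ξᵀ * ξ)) * Q := by
  have hQ' : Q * Qᵀ = 1 := mul_eq_one_comm.mp hQ
  have hgram : (ξ * Q)ᵀ * (ξ * Q) = Qᵀ * (ξᵀ * ξ) * Q := by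
    simp only [transpose_mul, Matrix.mul_assoc]
  refine ⟨hgram.symm, isUnit_one_add_gram (ξ * Q), ?_⟩
  have hconj : (1 : Matrix (Fin k) (Fin k) ℝ) + (1 / 4 : ℝ) • (Qᵀ * (ξᵀ * ξ) * Q) =
      Qᵀ * (1 + (1 / 4 : ℝ) • (ξᵀ * ξ)) * Q := by
    simp only [Matrix.mul_add, Matrix.add_mul, Matrix.mul_one, hQ, Matrix.mul_smul,
      Matrix.smul_mul]
  rw [hgram, hconj, Matrix.mul_inv_rev, Matrix.mul_inv_rev, inv_eq_left_inv hQ,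
    inv_eq_left_inv hQ']
  generalize ((1 : Matrix (Fin k) (Fin k) ℝ) + (1 / 4 : ℝ) • (ξᵀ * ξ))⁻¹ = N
  generalize ξᵀ * ξ = G
  have hcancel : ∀ A : Matrix (Fin k) (Fin k) ℝ, Q * (Qᵀ * A) = A := fun A => by
    rw [← Matrix.mul_assoc, hQ', Matrix.one_mul]
  simp only [Matrix.sub_mul, Matrix.add_mul, Matrix.smul_mul, Matrix.mul_assoc, hcancel]
end

section
/- Let Y and X be D×k real matrices with YᵀY = I_k, suppose I_k + YᵀX is invertible, and let Q be a k×k orthogonal matrix. Then I_k + (YQ)ᵀ(XQ) is invertible and the inverse-retraction formula is equivariant: 2·(XQ − (YQ)(YQ)ᵀ(XQ))·(I_k + (YQ)ᵀ(XQ))⁻¹ = [2·(X − YYᵀX)·(I_k + YᵀX)⁻¹]·Q. -/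
/-!
Since `Q` is orthogonal, `I + (YQ)ᵀ(XQ) = Qᵀ(I + YᵀX)Q`, a product of invertible matrices, with
inverse `Qᵀ(I + YᵀX)⁻¹Q`; and `QQᵀ = I` gives `XQ - (YQ)(YQ)ᵀ(XQ) = (X - YYᵀX)Q`. Multiplying
the two, the inner factor `QQᵀ` cancels and only the trailing `Q` remains.
-/

open Matrix

/-- Equivariance of the inverse retraction: for `Y ∈ St(k,D)`, any `X` with
`I + YᵀX` invertible, and `Q ∈ O(k)`, the matrix `I + (YQ)ᵀ(XQ)` is invertible and
`2(XQ − (YQ)(YQ)ᵀ(XQ))(I + (YQ)ᵀ(XQ))⁻¹ = [2(X − Y Yᵀ X)(I + Yᵀ X)⁻¹] Q`. -/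
theorem inverse_retraction_equivariant (D k : ℕ)
    (Y X : Matrix (Fin D) (Fin k) ℝ)
    (Q : Matrix (Fin k) (Fin k) ℝ)
    (hY : Yᵀ * Y = 1) (hQ : Qᵀ * Q = 1)
    (hInv : IsUnit ((1 : Matrix (Fin k) (Fin k) ℝ) + Yᵀ * X)) :
    IsUnit ((1 : Matrix (Fin k) (Fin k) ℝ) + (Y * Q)ᵀ * (X * Q)) ∧
    (2 : ℝ) • ((X * Q - (Y * Q) * ((Y * Q)ᵀ * (X * Q))) *
        ((1 : Matrix (Fin k) (Fin k) ℝ) + (Y * Q)ᵀ * (X * Q))⁻¹) =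
      ((2 : ℝ) • ((X - Y * (Yᵀ * X)) *
        ((1 : Matrix (Fin k) (Fin k) ℝ) + Yᵀ * X)⁻¹)) * Q := by
  have hQmul : Q * Qᵀ = 1 := mul_eq_one_comm.mp hQ
  have hQinv : Q⁻¹ = Qᵀ := inv_eq_left_inv hQ
  have hQTinv : (Qᵀ)⁻¹ = Q := inv_eq_left_inv hQmul
  have hconj : (1 : Matrix (Fin k) (Fin k) ℝ) + (Y * Q)ᵀ * (X * Q)
      = Qᵀ * (1 + Yᵀ * X) * Q := by
    rw [Matrix.mul_add, Matrix.add_mul, Matrix.mul_one, hQ, transpose_mul]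
    simp only [Matrix.mul_assoc]
  have hproj : X * Q - (Y * Q) * ((Y * Q)ᵀ * (X * Q)) = (X - Y * (Yᵀ * X)) * Q := by
    have hcancel : Q * (Qᵀ * (Yᵀ * (X * Q))) = Yᵀ * (X * Q) := by
      rw [← Matrix.mul_assoc, hQmul, Matrix.one_mul]
    rw [Matrix.sub_mul, transpose_mul]
    simp only [Matrix.mul_assoc, hcancel]
  rw [hconj, hproj]
  refine ⟨((IsUnit.of_mul_eq_one _ hQ).mul hInv).mul (IsUnit.of_mul_eq_one _ hQmul), ?_⟩
  have hcancel (M : Matrix (Fin k) (Fin k) ℝ) : Q * (Qᵀ * M) = M := by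
    rw [← Matrix.mul_assoc, hQmul, Matrix.one_mul]
  rw [Matrix.mul_inv_rev, Matrix.mul_inv_rev, hQinv, hQTinv, Matrix.smul_mul]
  simp only [Matrix.mul_assoc, hcancel]
end
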